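/- Consider the exploration process on Z^d defined via a fixed ordering of edges and {0,1}-valued random variables σ(t): at each step the minimal unexplored edge adjacent to the current good cluster is examined and its new endpoint declared good if σ(t+1) = 1, bad otherwise. If there is a constant θ with p_c^{site}(Z^d) < θ < 1 such that P(σ(0)=1) ≥ θ and P(σ(t+1)=1 | σ(0),…,σ(t)) ≥ θ for all t, then with positive probability the limiting set G_∞ of good vertices is infinite. -/

import Mathlib

open MeasureTheory ENNReal Filter

noncomputable section

abbrev Zd (d : ℕ) := Fin d → ℤ

def supNorm {d : ℕ} (x : Zd d) : ℕ := Finset.univ.sup fun i => (x i).natAbs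

def IsNbr {d : ℕ} (x y : Zd d) : Prop := (∑ i, |x i - y i|) = 1

def stepVec {d : ℕ} (p : Fin d × Bool) : Zd d :=
  fun j => if j = p.1 then (if p.2 then 1 else -1) else 0

def nbrs {d : ℕ} (y : Zd d) : Finset (Zd d) :=
  Finset.univ.image fun p : Fin d × Bool => y + stepVec p

/-- A family of measures which is a simple random walk on `ℤ^d` started at `x`. -/
structure SRW (d : ℕ) where
  P : Zd d → Measure (ℕ → Zd d)
  isProb : ∀ x, IsProbabilityMeasure (P x)
  start : ∀ x, P x {ω | ω 0 = x} = 1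
  nn : ∀ x, P x {ω | ∀ t, IsNbr (ω t) (ω (t+1))} = 1
  cyl : ∀ (x : Zd d) (n : ℕ) (γ : ℕ → Zd d), γ 0 = x →
      (∀ t < n, IsNbr (γ t) (γ (t+1))) →
      P x {ω | ∀ t ≤ n, ω t = γ t} = (((2 * d : ℕ) : ℝ≥0∞))⁻¹ ^ n

def HitBy {d : ℕ} (K : Set (Zd d)) (ℓ : ℕ) : Set (ℕ → Zd d) := {ω | ∃ t ≤ ℓ, ω t ∈ K}

def Hits {d : ℕ} (K : Set (Zd d)) : Set (ℕ → Zd d) := {ω | ∃ t, ω t ∈ K}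

def nPaths (d : ℕ) : ℕ → Zd d → Zd d → ℕ
  | 0, x, y => if x = y then 1 else 0
  | t+1, x, y => ∑ z ∈ nbrs y, nPaths d t x z

def pKer (d t : ℕ) (x y : Zd d) : ℝ≥0∞ := (nPaths d t x y : ℝ≥0∞) / ((2*d : ℕ) : ℝ≥0∞)^t

def green (d : ℕ) (x y : Zd d) : ℝ≥0∞ := ∑' t, pKer d t x y

def nAvoid {d : ℕ} (K : Finset (Zd d)) : ℕ → Zd d → ℕ
  | 0, _ => 1
  | t+1, x => ∑ z ∈ (nbrs x).filter (fun z => z ∉ K), nAvoid K t z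

def escProb {d : ℕ} (K : Finset (Zd d)) (x : Zd d) : ℝ≥0∞ :=
  ⨅ n, (nAvoid K n x : ℝ≥0∞) / ((2*d : ℕ) : ℝ≥0∞)^n

def cap {d : ℕ} (K : Finset (Zd d)) : ℝ≥0∞ := ∑ x ∈ K, escProb K x

def ConnIn {d : ℕ} (S : Set (Zd d)) (x y : Zd d) : Prop :=
  ∃ (n : ℕ) (γ : ℕ → Zd d), γ 0 = x ∧ γ n = y ∧ (∀ t < n, IsNbr (γ t) (γ (t+1))) ∧ ∀ t ≤ n, γ t ∈ S

def PercSet {d : ℕ} (S : Set (Zd d)) : Prop := ∃ x ∈ S, {y | ConnIn S x y}.Infinite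

def IsAnimal {d : ℕ} (H : Finset (Zd d)) : Prop :=
  (0 : Zd d) ∈ H ∧ ∀ x ∈ H, ∀ y ∈ H, ConnIn (H : Set (Zd d)) x y

abbrev Animal (d : ℕ) := {H : Finset (Zd d) // IsAnimal H}

def zooTrace {d : ℕ} {Ω : Type*} (N : Zd d × Animal d → Ω → ℕ) (ω : Ω) : Set (Zd d) :=
  {z | ∃ p : Zd d × Animal d, 1 ≤ N p ω ∧ z - p.1 ∈ p.2.1}

def poissonProb (lam : ℝ) (k : ℕ) : ℝ≥0∞ :=
  ENNReal.ofReal (Real.exp (-lam) * lam ^ k / (Nat.factorial k))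

def cluster {d : ℕ} (S : Set (Zd d)) (x : Zd d) : Set (Zd d) := {y | x ∈ S ∧ ConnIn S x y}

def closF {d : ℕ} (H : Finset (Zd d)) : Finset (Zd d) := H ∪ H.biUnion nbrs


abbrev Worm (d : ℕ) := Σ n : ℕ, (Zd d × (Fin n → Fin d × Bool))

def wormLen {d : ℕ} (w : Worm d) : ℕ := w.1 + 1

def IsBernoulliSite {d : ℕ} (P : Measure (Zd d → Bool)) (p : ℝ≥0∞) : Prop :=
  ∀ A B : Finset (Zd d), Disjoint A B →
    P {η | (∀ a ∈ A, η a = true) ∧ ∀ b ∈ B, η b = false} = p ^ A.card * (1 - p) ^ B.card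

/-- The critical probability of Bernoulli site percolation on `ℤ^d`. -/
def pcSite (d : ℕ) : ℝ≥0∞ :=
  sInf {p | ∀ P : Measure (Zd d → Bool), IsProbabilityMeasure P → IsBernoulliSite P p →
    P {η | PercSet {x | η x = true}} = 1}

open Classical in
/-- The Grimmett–Marstrand exploration process: given an ordering `emb` of the (directed)
nearest-neighbour edges and outcomes `b t`, produce the pair (good set, bad set) at step `t`. -/
def explore {d : ℕ} (emb : (Zd d × Zd d) ↪ ℕ) (b : ℕ → Bool) : ℕ → Finset (Zd d) × Finset (Zd d)
  | 0 => if b 0 then ({0}, ∅) else (∅, {0})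
  | t+1 =>
    let G := (explore emb b t).1
    let B := (explore emb b t).2
    let cand : Finset (Zd d × Zd d) :=
      G.biUnion fun u => ((nbrs u).filter fun w => w ∉ G ∧ w ∉ B).image fun w => (u, w)
    if h : cand.Nonempty then
      let e := (Finset.exists_min_image cand (fun p => emb p) h).choose
      if b (t+1) then (insert e.2 G, B) else (G, insert e.2 B)
    else (G, B)

/-- Mutual Dirichlet energy of two measures on `ℤ^d` w.r.t. the random-walk Green function. -/
def energy (d : ℕ) (μ₁ μ₂ : Zd d → ℝ≥0∞) : ℝ≥0∞ :=
  ∑' x, ∑' y, green d x y * μ₁ x * μ₂ y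

/-!
Fix `p < θ` at which Bernoulli site percolation has an infinite cluster, and let `η` be an i.i.d.
configuration of density `p`. At time `t`, let `X_t` be the probability that the origin has an
infinite open cluster in `η` once the labels of the explored vertices are overridden by those the
exploration has found. Revealing one more vertex with a label that is `true` with probability
exactly `p` would preserve `X_t` on average; the event is increasing, so a conditional probability
of at least `p` can only increase it. Thus `X_t` is a submartingale, and `E X_t` is at least
`P_p(0 ↔ ∞) > 0` for all `t`. Once the exploration is frozen, its good set is finite and enclosed
by bad vertices, hence `X_t = 0`. Therefore the exploration is still active at time `t` with
probability at least `P_p(0 ↔ ∞)`, and letting `t → ∞` this bounds the probability that it never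
freezes. Infinitely many vertices are then explored, each of them the origin, good, or adjacent to
a good vertex, so infinitely many are good.
-/

section ProductMeasures

variable {ι : Type*} [DecidableEq ι] {X : ι → Type*} [∀ i, MeasurableSpace (X i)]

theorem map_update_prod_infinitePi (μ : ∀ i, Measure (X i)) [∀ i, IsProbabilityMeasure (μ i)]
    (i : ι) :
    ((Measure.infinitePi μ).prod (μ i)).map (fun q => Function.update q.1 i q.2) =
      Measure.infinitePi μ := by
  refine Measure.eq_infinitePi μ fun s t ht => ?_
  have hbox : (fun q : (∀ j, X j) × X i => Function.update q.1 i q.2) ⁻¹' (s : Set ι).pi t =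
      ((s.erase i : Finset ι) : Set ι).pi t ×ˢ {x | i ∈ s → x ∈ t i} := by
    ext ⟨η, x⟩
    simp only [Set.mem_preimage, Set.mem_pi, Finset.mem_coe, Set.mem_prod, Finset.mem_erase,
      Set.mem_ofPred_eq]
    refine ⟨fun h => ⟨fun j hj => ?_, fun hi => ?_⟩, fun ⟨hη, hx⟩ j hj => ?_⟩
    · simpa [hj.1] using h j hj.2
    · simpa using h i hi
    · obtain rfl | hji := eq_or_ne j i
      · simpa using hx hj
      · simpa [hji] using hη j ⟨hji, hj⟩
  rw [Measure.map_apply measurable_update' (.pi s.countable_toSet fun j _ => ht j), hbox,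
    Measure.prod_prod, Measure.infinitePi_pi μ fun j _ => ht j]
  by_cases hi : i ∈ s
  · simp only [hi, forall_const, Set.ofPred_mem_eq]
    exact s.prod_erase_mul (fun j => μ j (t j)) hi
  · simp [hi, Finset.erase_eq_of_notMem]

theorem infinitePi_apply_eq_lintegral_update (μ : ∀ i, Measure (X i))
    [∀ i, IsProbabilityMeasure (μ i)] (i : ι) {A : Set (∀ i, X i)} (hA : MeasurableSet A) :
    Measure.infinitePi μ A =
      ∫⁻ x, Measure.infinitePi μ {η | Function.update η i x ∈ A} ∂(μ i) := by
  conv_lhs => rw [← map_update_prod_infinitePi μ i, Measure.map_apply measurable_update' hA,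
    Measure.prod_apply_symm (measurable_update' hA)]
  rfl

end ProductMeasures

section Measurability

theorem measurable_of_dependsOn {ι β : Type*} {X : ι → Type*} [∀ i, MeasurableSpace (X i)]
    [∀ i, MeasurableSingletonClass (X i)] [∀ i, Finite (X i)] [MeasurableSpace β] [Nonempty β]
    {s : Set ι} [Finite s] {f : (∀ i, X i) → β} (hf : DependsOn f s) : Measurable f := by
  obtain ⟨g, rfl⟩ := dependsOn_iff_exists_comp.1 hf
  exact (measurable_of_finite g).comp (Set.measurable_restrict s)

theorem measurableSet_setOf_infinite {ι α : Type*} [Countable ι] [MeasurableSpace α]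
    {s : ι → Set α} (hs : ∀ i, MeasurableSet (s i)) :
    MeasurableSet {x | {i | x ∈ s i}.Infinite} := by
  have heq : {x | {i | x ∈ s i}.Infinite} = ⋂ F : Finset ι, ⋃ i ∉ F, s i := by
    ext x
    simp only [Set.mem_ofPred_eq, Set.mem_iInter, Set.mem_iUnion, exists_prop]
    refine ⟨fun h F => ?_, fun h hfin => ?_⟩
    · obtain ⟨i, hi, hiF⟩ := h.exists_notMem_finset F
      exact ⟨i, hiF, hi⟩
    · obtain ⟨i, hiF, hi⟩ := h hfin.toFinset
      exact hiF (hfin.mem_toFinset.2 hi)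
  rw [heq]
  exact .iInter fun F => .iUnion fun i => .iUnion fun _ => hs i

theorem lintegral_le_lintegral_of_fibers {Ω β : Type*} [MeasurableSpace Ω] [MeasurableSpace β]
    [MeasurableSingletonClass β] [Countable β] {P : Measure Ω} {r : Ω → β} (hr : Measurable r)
    {f g : Ω → ℝ≥0∞} (h : ∀ c, ∫⁻ ω in r ⁻¹' {c}, f ω ∂P ≤ ∫⁻ ω in r ⁻¹' {c}, g ω ∂P) :
    ∫⁻ ω, f ω ∂P ≤ ∫⁻ ω, g ω ∂P := by
  have hsum (k : Ω → ℝ≥0∞) : ∫⁻ ω, k ω ∂P = ∑' c, ∫⁻ ω in r ⁻¹' {c}, k ω ∂P := by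
    rw [← lintegral_iUnion (fun c => hr (measurableSet_singleton c)) (pairwise_disjoint_fiber r),
      ← Set.preimage_iUnion, Set.iUnion_of_singleton, Set.preimage_univ, Measure.restrict_univ]
  rw [hsum f, hsum g]
  exact ENNReal.tsum_le_tsum h

theorem measurableSet_history {Ω : Type*} [MeasurableSpace Ω] {σ : ℕ → Ω → Bool}
    (hσ : ∀ t, Measurable (σ t)) (t : ℕ) (b : ℕ → Bool) :
    MeasurableSet {ω | ∀ s ≤ t, σ s ω = b s} := by
  simp only [Set.ofPred_forall]
  exact .iInter fun s => .iInter fun _ => hσ s (.singleton (b s))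

theorem lintegral_le_lintegral_of_histories {Ω : Type*} [MeasurableSpace Ω] {P : Measure Ω}
    {σ : ℕ → Ω → Bool} (hσ : ∀ t, Measurable (σ t)) (t : ℕ) {f g : Ω → ℝ≥0∞}
    (h : ∀ b : ℕ → Bool, ∫⁻ ω in {ω | ∀ s ≤ t, σ s ω = b s}, f ω ∂P ≤
      ∫⁻ ω in {ω | ∀ s ≤ t, σ s ω = b s}, g ω ∂P) :
    ∫⁻ ω, f ω ∂P ≤ ∫⁻ ω, g ω ∂P := by
  have hr : Measurable fun ω => (Set.Iic t).domRestrict (fun s => σ s ω) :=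
    measurable_pi_lambda _ fun s => hσ s
  refine lintegral_le_lintegral_of_fibers hr fun c => ?_
  let b : ℕ → Bool := fun s => if hs : s ∈ Set.Iic t then c ⟨s, hs⟩ else false
  have hfiber : (fun ω => (Set.Iic t).domRestrict (fun s => σ s ω)) ⁻¹' {c} =
      {ω | ∀ s ≤ t, σ s ω = b s} := by
    ext ω
    simp +contextual [funext_iff, b]
  rw [hfiber]
  exact h b

end Measurability

section BernoulliProduct

theorem exists_isProbabilityMeasure_bool {p : ℝ≥0∞} (hp : p ≤ 1) :
    ∃ ν : Measure Bool, IsProbabilityMeasure ν ∧ ν {true} = p := by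
  refine ⟨ProbabilityTheory.bernoulliMeasure true false
    ⟨p.toReal, toReal_nonneg, toReal_le_of_le_ofReal zero_le_one (by simpa using hp)⟩,
    inferInstance, ?_⟩
  rw [ProbabilityTheory.bernoulliMeasure_apply_of_mem_of_notMem _ (.singleton _) rfl (by simp)]
  exact ENNReal.coe_toNNReal (ne_top_of_le_ne_top one_ne_top hp)

theorem lintegral_comp_bool_eq_add {α : Type*} [MeasurableSpace α] {μ : Measure α} {X : α → Bool}
    (hX : Measurable X) {f : Bool → ℝ≥0∞} {δ : ℝ≥0∞} (hδ : f true = f false + δ) :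
    ∫⁻ a, f (X a) ∂μ = f false * μ Set.univ + δ * μ (X ⁻¹' {true}) := by
  have hmeas : MeasurableSet (X ⁻¹' {true}) := hX (.singleton true)
  have hf (a : α) : f (X a) = f false + δ * (X ⁻¹' {true}).indicator 1 a := by
    cases h : X a <;> simp [h, hδ]
  rw [lintegral_congr hf, lintegral_add_left measurable_const, lintegral_const,
    lintegral_const_mul _ (measurable_one.indicator hmeas), lintegral_indicator_one hmeas]

theorem lintegral_mul_le_setLIntegral_of_mul_le {Ω : Type*} [MeasurableSpace Ω] {P : Measure Ω}
    {ν : Measure Bool} [IsProbabilityMeasure ν] {X : Ω → Bool} (hX : Measurable X) {C : Set Ω}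
    (hC : ν {true} * P C ≤ P ({ω | X ω = true} ∩ C)) {f : Bool → ℝ≥0∞} (hf : Monotone f) :
    (∫⁻ c, f c ∂ν) * P C ≤ ∫⁻ ω in C, f (X ω) ∂P := by
  obtain ⟨δ, hδ⟩ := exists_add_of_le (hf (Bool.false_le true))
  calc (∫⁻ c, f c ∂ν) * P C = f false * P C + δ * (ν {true} * P C) := by
        have hν := lintegral_comp_bool_eq_add (μ := ν) measurable_id hδ
        simp only [id_eq, measure_univ, Set.preimage_id] at hν
        rw [hν]
        ring
    _ ≤ f false * P C + δ * P ({ω | X ω = true} ∩ C) := by gcongr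
    _ = ∫⁻ ω in C, f (X ω) ∂P := by
        rw [lintegral_comp_bool_eq_add hX hδ, Measure.restrict_apply_univ,
          Measure.restrict_apply (hX (.singleton true))]
        rfl

/-- The law of i.i.d. Boolean labels with common law `ν` on the vertex set `V`. -/
abbrev siteLaw (V : Type*) (ν : Measure Bool) : Measure (V → Bool) :=
  Measure.infinitePi fun _ => ν

theorem siteLaw_map_comp_equiv {V W : Type*} (ν : Measure Bool) [IsProbabilityMeasure ν]
    (e : V ≃ W) :
    (siteLaw W ν).map (fun η v => η (e v)) = siteLaw V ν := by
  have heq : (fun (η : W → Bool) v => η (e v)) =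
      MeasurableEquiv.piCongrLeft (fun _ => Bool) e.symm := by
    ext η v
    obtain ⟨w, rfl⟩ := e.symm.surjective v
    rw [MeasurableEquiv.piCongrLeft_apply_apply, e.apply_symm_apply]
  rw [heq]
  exact Measure.infinitePi_map_piCongrLeft (fun _ => ν) e.symm

theorem isBernoulliSite_siteLaw (d : ℕ) (ν : Measure Bool) [IsProbabilityMeasure ν] :
    IsBernoulliSite (siteLaw (Zd d) ν) (ν {true}) := by
  intro A B hAB
  have hB {x : Zd d} (hx : x ∈ B) : x ∉ A := Finset.disjoint_right.1 hAB hx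
  have hbox : {η : Zd d → Bool | (∀ a ∈ A, η a = true) ∧ ∀ b ∈ B, η b = false} =
      Set.pi ((A ∪ B : Finset (Zd d)) : Set (Zd d)) (fun x => {decide (x ∈ A)}) := by
    ext η
    simp only [Set.mem_ofPred_eq, Set.mem_pi, Finset.mem_coe, Finset.mem_union, or_imp,
      forall_and, Set.mem_singleton_iff]
    refine and_congr (forall₂_congr fun a ha => by simp [ha])
      (forall₂_congr fun b hb => by simp [hB hb])
  have hfalse : ν {false} = 1 - ν {true} := by
    rw [← prob_compl_eq_one_sub (.singleton true), Bool.compl_singleton, Bool.not_true]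
  rw [hbox, Measure.infinitePi_pi _ fun _ _ => .of_discrete, Finset.prod_union hAB,
    Finset.prod_eq_pow_card (b := ν {true}) fun a ha => by simp [ha],
    Finset.prod_eq_pow_card (b := ν {false}) fun b hb => by simp [hB hb], hfalse]

end BernoulliProduct

section Revealing

variable {V : Type*} [DecidableEq V]

/-- The state (good set, bad set) of an exploration after the vertex `e` has received the
label `c`. -/
def reveal (s : Finset V × Finset V) (e : V) (c : Bool) : Finset V × Finset V :=
  if c then (insert e s.1, s.2) else (s.1, insert e s.2)

theorem reveal_fst_union_snd (s : Finset V × Finset V) (e : V) (c : Bool) :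
    (reveal s e c).1 ∪ (reveal s e c).2 = insert e (s.1 ∪ s.2) := by
  cases c <;> simp [reveal]

theorem fst_subset_reveal_fst (s : Finset V × Finset V) (e : V) (c : Bool) :
    s.1 ⊆ (reveal s e c).1 := by
  cases c <;> simp [reveal]

/-- The configuration `η` with the labels of the explored vertices overridden by those recorded
in the exploration state `s`. -/
def overrideBy (s : Finset V × Finset V) (η : V → Bool) : V → Bool :=
  s.1.piecewise (fun _ => true) (s.2.piecewise (fun _ => false) η)

theorem overrideBy_empty (η : V → Bool) : overrideBy (∅, ∅) η = η := by
  simp [overrideBy]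

theorem overrideBy_reveal {s : Finset V × Finset V} {e : V} (he : e ∉ s.1) (c : Bool)
    (η : V → Bool) : overrideBy (reveal s e c) η = Function.update (overrideBy s η) e c := by
  cases c
  · change s.1.piecewise _ ((insert e s.2).piecewise (fun _ => false) η) = _
    rw [Finset.piecewise_insert, overrideBy, Finset.update_piecewise_of_notMem _ _ _ he]
  · change (insert e s.1).piecewise (fun _ => true) (s.2.piecewise (fun _ => false) η) = _
    rw [Finset.piecewise_insert, overrideBy]

theorem overrideBy_update {s : Finset V × Finset V} {e : V} (he : e ∉ s.1) (he' : e ∉ s.2)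
    (c : Bool) (η : V → Bool) :
    overrideBy s (Function.update η e c) = Function.update (overrideBy s η) e c := by
  simp only [overrideBy, Finset.update_piecewise_of_notMem _ _ _ he,
    Finset.update_piecewise_of_notMem _ _ _ he']

theorem measurable_overrideBy (s : Finset V × Finset V) : Measurable (overrideBy s) := by
  refine measurable_pi_lambda _ fun v => ?_
  by_cases h₁ : v ∈ s.1
  · simp [overrideBy, h₁]
  by_cases h₂ : v ∈ s.2
  · simp [overrideBy, h₁, h₂]
  · simpa [overrideBy, h₁, h₂] using measurable_pi_apply v

/-- The conditional probability of `A` under `siteLaw V ν`, given that the labels explored so far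
are those recorded in `s`. -/
def condProb (ν : Measure Bool) (s : Finset V × Finset V) (A : Set (V → Bool)) : ℝ≥0∞ :=
  siteLaw V ν {η | overrideBy s η ∈ A}

variable {ν : Measure Bool} {s : Finset V × Finset V} {e : V} {A : Set (V → Bool)}

theorem condProb_empty : condProb ν (∅, ∅) A = siteLaw V ν A := by
  simp [condProb, overrideBy_empty]

theorem condProb_eq_lintegral_reveal [IsProbabilityMeasure ν] (hA : MeasurableSet A)
    (he : e ∉ s.1) (he' : e ∉ s.2) :
    condProb ν s A = ∫⁻ c, condProb ν (reveal s e c) A ∂ν := by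
  refine (infinitePi_apply_eq_lintegral_update _ e (measurable_overrideBy s hA)).trans ?_
  simp only [condProb, overrideBy_reveal he, Set.mem_preimage, overrideBy_update he he']

theorem monotone_condProb_reveal (hA : IsUpperSet A) (he : e ∉ s.1) :
    Monotone fun c => condProb ν (reveal s e c) A := by
  intro c c' hcc'
  refine measure_mono fun η hη => ?_
  simp only [Set.mem_ofPred_eq, overrideBy_reveal he] at hη ⊢
  exact hA (update_le_update_iff'.2 hcc') hη

theorem condProb_mul_le_setLIntegral_reveal [IsProbabilityMeasure ν] (hA : MeasurableSet A)
    (hA' : IsUpperSet A) (he : e ∉ s.1) (he' : e ∉ s.2) {Ω : Type*} [MeasurableSpace Ω]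
    {P : Measure Ω} {X : Ω → Bool} (hX : Measurable X) {C : Set Ω}
    (hC : ν {true} * P C ≤ P ({ω | X ω = true} ∩ C)) :
    condProb ν s A * P C ≤ ∫⁻ ω in C, condProb ν (reveal s e (X ω)) A ∂P := by
  rw [condProb_eq_lintegral_reveal hA he he']
  exact lintegral_mul_le_setLIntegral_of_mul_le hX hC (monotone_condProb_reveal hA' he)

end Revealing

section Percolation

variable {d : ℕ}

theorem IsNbr.exists_abs_sub_eq_one {x y : Zd d} (h : IsNbr x y) :
    ∃ i, |x i - y i| = 1 ∧ ∀ j ≠ i, x j = y j := by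
  obtain ⟨i, -, hi⟩ : ∃ i ∈ Finset.univ, |x i - y i| ≠ 0 :=
    Finset.exists_ne_zero_of_sum_ne_zero (h.trans_ne one_ne_zero)
  have hsplit : |x i - y i| + ∑ j ∈ Finset.univ.erase i, |x j - y j| = 1 :=
    (Finset.add_sum_erase _ (fun j => |x j - y j|) (Finset.mem_univ i)).trans h
  have hnonneg : ∀ j ∈ Finset.univ.erase i, 0 ≤ |x j - y j| := fun j _ => abs_nonneg _
  have hrest_nonneg := Finset.sum_nonneg hnonneg
  have hi_pos := (abs_nonneg (x i - y i)).lt_of_ne' hi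
  have hrest : ∑ j ∈ Finset.univ.erase i, |x j - y j| = 0 := by lia
  refine ⟨i, by lia, fun j hj => ?_⟩
  have hj₀ := (Finset.sum_eq_zero_iff_of_nonneg hnonneg).1 hrest j (by simpa using hj)
  exact sub_eq_zero.1 (abs_eq_zero.1 hj₀)

theorem IsNbr.mem_nbrs {x y : Zd d} (h : IsNbr x y) : y ∈ nbrs x := by
  obtain ⟨i, hi, hne⟩ := h.exists_abs_sub_eq_one
  refine Finset.mem_image.2 ⟨(i, decide (x i < y i)), Finset.mem_univ _, ?_⟩
  ext j
  obtain rfl | hj := eq_or_ne j i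
  · simp only [Pi.add_apply, stepVec, if_true, decide_eq_true_eq]
    grind
  · simp [stepVec, hj, hne j hj]

theorem ConnIn.mono {S T : Set (Zd d)} (hST : S ⊆ T) {x y : Zd d} (h : ConnIn S x y) :
    ConnIn T x y := by
  obtain ⟨n, γ, hx, hy, hstep, hmem⟩ := h
  exact ⟨n, γ, hx, hy, hstep, fun t ht => hST (hmem t ht)⟩

theorem ConnIn.sub_right {S : Set (Zd d)} {x y : Zd d} (h : ConnIn S x y) (a : Zd d) :
    ConnIn {z | z + a ∈ S} (x - a) (y - a) := by
  obtain ⟨n, γ, rfl, rfl, hstep, hmem⟩ := h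
  refine ⟨n, fun t => γ t - a, rfl, rfl, fun t ht => ?_, fun t ht => ?_⟩
  · simpa [IsNbr] using hstep t ht
  · simpa using hmem t ht

theorem ConnIn.mem_of_closed {S T : Set (Zd d)} {x y : Zd d} (h : ConnIn S x y)
    (hx : x ∈ S → x ∈ T) (hT : ∀ u ∈ T, ∀ w ∈ S, IsNbr u w → w ∈ T) : y ∈ T := by
  obtain ⟨n, γ, rfl, rfl, hstep, hmem⟩ := h
  have hγ (t : ℕ) : t ≤ n → γ t ∈ T := by
    induction t with
    | zero => exact fun _ => hx (hmem 0 n.zero_le)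
    | succ t ih => exact fun ht => hT _ (ih (by lia)) _ (hmem _ ht) (hstep t ht)
  exact hγ n le_rfl

/-- The event that the cluster of open (`true`) sites containing `x` is infinite. -/
def infiniteCluster (x : Zd d) : Set (Zd d → Bool) :=
  {η | {y | ConnIn {z | η z = true} x y}.Infinite}

theorem isUpperSet_infiniteCluster (x : Zd d) : IsUpperSet (infiniteCluster x) := by
  intro η η' hle hη
  refine hη.mono fun y hy => hy.mono fun z hz => ?_
  exact Bool.eq_true_of_true_le (hz.ge.trans (hle z))

theorem isOpen_setOf_connIn (x y : Zd d) :
    IsOpen {η : Zd d → Bool | ConnIn {z | η z = true} x y} := by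
  simp only [ConnIn, Set.ofPred_exists]
  refine isOpen_iUnion fun n => isOpen_iUnion fun γ =>
    isOpen_const.and (isOpen_const.and (isOpen_const.and ?_))
  have hopen (t : ℕ) : IsOpen {η : Zd d → Bool | η (γ t) = true} :=
    (isOpen_discrete {true}).preimage (by fun_prop : Continuous fun η : Zd d → Bool => η (γ t))
  simp only [Set.ofPred_forall]
  exact (Set.finite_Iic n).isOpen_biInter fun t _ => hopen t

theorem measurableSet_infiniteCluster (x : Zd d) : MeasurableSet (infiniteCluster x) :=
  measurableSet_setOf_infinite fun y => (isOpen_setOf_connIn x y).measurableSet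

theorem siteLaw_infiniteCluster_le (ν : Measure Bool) [IsProbabilityMeasure ν] (x : Zd d) :
    siteLaw (Zd d) ν (infiniteCluster x) ≤ siteLaw (Zd d) ν (infiniteCluster 0) := by
  calc siteLaw (Zd d) ν (infiniteCluster x)
      ≤ siteLaw (Zd d) ν ((fun η y => η (y + x)) ⁻¹' infiniteCluster 0) := by
        refine measure_mono fun η hη => ?_
        refine (hη.image (sub_left_injective (b := x)).injOn).mono ?_
        rintro _ ⟨y, hy, rfl⟩
        simpa using hy.sub_right x
    _ = siteLaw (Zd d) ν (infiniteCluster 0) := by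
        rw [← Measure.map_apply (by fun_prop) (measurableSet_infiniteCluster 0)]
        exact congrArg (· (infiniteCluster 0)) (siteLaw_map_comp_equiv ν (Equiv.addRight x))

theorem siteLaw_infiniteCluster_pos {ν : Measure Bool} [IsProbabilityMeasure ν]
    (h : siteLaw (Zd d) ν {η | PercSet {x | η x = true}} ≠ 0) :
    0 < siteLaw (Zd d) ν (infiniteCluster 0) := by
  refine pos_iff_ne_zero.2 fun h₀ => h (measure_mono_null (t := ⋃ x, infiniteCluster x) ?_ ?_)
  · rintro η ⟨x, -, hx⟩
    exact Set.mem_iUnion.2 ⟨x, hx⟩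
  · exact measure_iUnion_null fun x => le_zero_iff.1 (h₀ ▸ siteLaw_infiniteCluster_le ν x)

end Percolation

section Exploration

variable {d : ℕ} {s : Finset (Zd d) × Finset (Zd d)} (emb : (Zd d × Zd d) ↪ ℕ)

/-- The exploration can proceed from the state `s`: some good vertex has an unexplored
neighbour. -/
def IsActive (s : Finset (Zd d) × Finset (Zd d)) : Prop :=
  ∃ u ∈ s.1, ∃ w ∈ nbrs u, w ∉ s.1 ∧ w ∉ s.2

theorem overrideBy_notMem_infiniteCluster_of_not_isActive (h₀ : 0 ∈ s.1 ∪ s.2) (hs : ¬ IsActive s)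
    (η : Zd d → Bool) : overrideBy s η ∉ infiniteCluster 0 := by
  have hgood {z : Zd d} (hz : z ∈ s.1 ∪ s.2) (hη : overrideBy s η z = true) : z ∈ s.1 := by
    by_contra hz'
    simp_all [overrideBy]
  refine Set.not_infinite.2 (s.1.finite_toSet.subset fun y hy => ?_)
  refine hy.mem_of_closed (hgood h₀) fun u hu w hw huw => hgood ?_ hw
  by_contra hw'
  exact hs ⟨u, hu, w, huw.mem_nbrs, by simpa using hw'⟩

theorem condProb_infiniteCluster_eq_zero_of_not_isActive (ν : Measure Bool) (h₀ : 0 ∈ s.1 ∪ s.2)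
    (hs : ¬ IsActive s) : condProb ν s (infiniteCluster 0) = 0 := by
  simp [condProb, overrideBy_notMem_infiniteCluster_of_not_isActive h₀ hs]

theorem explore_zero (b : ℕ → Bool) : explore emb b 0 = reveal (∅, ∅) 0 (b 0) :=
  rfl

theorem explore_succ_of_not_isActive {b : ℕ → Bool} {t : ℕ}
    (h : ¬ IsActive (explore emb b t)) : explore emb b (t + 1) = explore emb b t := by
  rw [explore]
  refine dif_neg ?_
  rintro ⟨p, hp⟩
  simp only [Finset.mem_biUnion, Finset.mem_image, Finset.mem_filter] at hp
  obtain ⟨u, hu, w, ⟨hw, hnew⟩, -⟩ := hp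
  exact h ⟨u, hu, w, hw, hnew⟩

open Classical in
theorem exists_explore_succ_eq_reveal (hs : IsActive s) :
    ∃ e, e ∉ s.1 ∧ e ∉ s.2 ∧ e ∈ closF s.1 ∧
      ∀ b t, explore emb b t = s → explore emb b (t + 1) = reveal s e (b (t + 1)) := by
  have hcand : (s.1.biUnion fun u =>
      ((nbrs u).filter fun w => w ∉ s.1 ∧ w ∉ s.2).image fun w => (u, w)).Nonempty := by
    obtain ⟨u, hu, w, hw, hnew⟩ := hs
    exact ⟨(u, w), Finset.mem_biUnion.2
      ⟨u, hu, Finset.mem_image_of_mem _ (Finset.mem_filter.2 ⟨hw, hnew⟩)⟩⟩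
  let q := (Finset.exists_min_image _ (fun p => emb p) hcand).choose
  have hq := (Finset.exists_min_image _ (fun p => emb p) hcand).choose_spec.1
  obtain ⟨u, hu, hqu⟩ := Finset.mem_biUnion.1 hq
  obtain ⟨w, hw, hwq : (u, w) = q⟩ := Finset.mem_image.1 hqu
  obtain ⟨hwu, hw₁, hw₂⟩ := Finset.mem_filter.1 hw
  refine ⟨w, hw₁, hw₂, Finset.mem_union_right _ (Finset.mem_biUnion.2 ⟨u, hu, hwu⟩), ?_⟩
  rintro b t rfl
  rw [show w = q.2 from congrArg Prod.snd hwq, explore, dif_pos hcand]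
  -- The two sides differ only in the decidable equality on `Zd d` used by `insert`.
  unfold reveal
  congr

theorem explore_induction {p : Finset (Zd d) × Finset (Zd d) → Prop}
    (h₀ : ∀ c, p (reveal (∅, ∅) 0 c))
    (hstep : ∀ s, ∀ e ∈ closF s.1, ∀ c, p s → p (reveal s e c)) (b : ℕ → Bool) (t : ℕ) :
    p (explore emb b t) := by
  induction t with
  | zero => exact h₀ (b 0)
  | succ t ih =>
    by_cases hs : IsActive (explore emb b t)
    · obtain ⟨e, -, -, he, hsucc⟩ := exists_explore_succ_eq_reveal emb hs
      rw [hsucc b t rfl]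
      exact hstep _ e he _ ih
    · rwa [explore_succ_of_not_isActive emb hs]

theorem dependsOn_explore (t : ℕ) : DependsOn (fun b => explore emb b t) (Set.Iic t) := by
  induction t with
  | zero => exact fun b b' h => by simp only [explore_zero, h 0 Set.self_mem_Iic]
  | succ t ih =>
    intro b b' h
    have hprev : explore emb b' t = explore emb b t :=
      (ih fun s hs => h s (Set.Iic_subset_Iic.2 t.le_succ hs)).symm
    by_cases hs : IsActive (explore emb b t)
    · obtain ⟨e, -, -, -, hsucc⟩ := exists_explore_succ_eq_reveal emb hs
      simp only [hsucc b t rfl, hsucc b' t hprev, h (t + 1) Set.self_mem_Iic]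
    · simp only [explore_succ_of_not_isActive emb hs,
        explore_succ_of_not_isActive emb (hprev ▸ hs), hprev]

theorem zero_mem_explore (b : ℕ → Bool) (t : ℕ) :
    0 ∈ (explore emb b t).1 ∪ (explore emb b t).2 := by
  refine explore_induction emb (p := fun s => 0 ∈ s.1 ∪ s.2) (fun c => ?_)
    (fun s e _ c hs => ?_) b t
  · simp [reveal_fst_union_snd]
  · rw [reveal_fst_union_snd]
    exact Finset.mem_insert_of_mem hs

theorem closF_mono {H K : Finset (Zd d)} (h : H ⊆ K) : closF H ⊆ closF K :=
  Finset.union_subset_union h (Finset.biUnion_subset_biUnion_of_subset_left _ h)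

theorem explore_subset_insert_closF (b : ℕ → Bool) (t : ℕ) :
    (explore emb b t).1 ∪ (explore emb b t).2 ⊆ insert 0 (closF (explore emb b t).1) := by
  refine explore_induction emb (p := fun s => s.1 ∪ s.2 ⊆ insert 0 (closF s.1)) (fun c => ?_)
    (fun s e he c hs => ?_) b t
  · simp [reveal_fst_union_snd]
  · have hmono : closF s.1 ⊆ closF (reveal s e c).1 := closF_mono (fst_subset_reveal_fst s e c)
    rw [reveal_fst_union_snd]
    exact Finset.insert_subset (Finset.mem_insert_of_mem (hmono he))
      (hs.trans (Finset.insert_subset_insert 0 hmono))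

theorem antitone_isActive_explore (b : ℕ → Bool) :
    Antitone fun t => IsActive (explore emb b t) := by
  refine antitone_nat_of_succ_le fun t hsucc => ?_
  by_contra hs
  exact hs (explore_succ_of_not_isActive emb hs ▸ hsucc)

theorem card_explore_of_forall_isActive (b : ℕ → Bool) (h : ∀ t, IsActive (explore emb b t))
    (t : ℕ) : ((explore emb b t).1 ∪ (explore emb b t).2).card = t + 1 := by
  induction t with
  | zero => simp [explore_zero, reveal_fst_union_snd]
  | succ t ih =>
    obtain ⟨e, he₁, he₂, -, hsucc⟩ := exists_explore_succ_eq_reveal emb (h t)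
    rw [hsucc b t rfl, reveal_fst_union_snd, Finset.card_insert_of_notMem (by simp [he₁, he₂]), ih]

theorem infinite_iUnion_explore_of_forall_isActive {b : ℕ → Bool}
    (h : ∀ t, IsActive (explore emb b t)) :
    (⋃ t, ((explore emb b t).1 : Set (Zd d))).Infinite := by
  intro hfin
  have hgood (t : ℕ) : (explore emb b t).1 ⊆ hfin.toFinset := fun x hx =>
    hfin.mem_toFinset.2 (Set.mem_iUnion.2 ⟨t, hx⟩)
  have hcard (t : ℕ) : t + 1 ≤ (insert 0 (closF hfin.toFinset)).card := by
    rw [← card_explore_of_forall_isActive emb b h t]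
    exact Finset.card_le_card ((explore_subset_insert_closF emb b t).trans
      (Finset.insert_subset_insert 0 (closF_mono (hgood t))))
  exact (hcard _).not_gt (Nat.lt_succ_self _)

end Exploration

section Comparison

variable {d : ℕ} (emb : (Zd d × Zd d) ↪ ℕ) {Ω : Type*} [MeasurableSpace Ω] {P : Measure Ω}
  {σ : ℕ → Ω → Bool}

theorem measurableSet_isActive_explore (hσ : ∀ t, Measurable (σ t)) (t : ℕ) :
    MeasurableSet {ω | IsActive (explore emb (fun s => σ s ω) t)} := by
  have hdep : DependsOn (fun b => IsActive (explore emb b t)) (Set.Iic t) := fun b b' h =>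
    congrArg IsActive (dependsOn_explore emb t h)
  exact ((measurable_of_dependsOn hdep).comp (measurable_pi_lambda _ hσ)).setOf

variable {ν : Measure Bool} [IsProbabilityMeasure ν]

theorem siteLaw_le_lintegral_condProb_explore_zero [IsProbabilityMeasure P]
    {A : Set (Zd d → Bool)} (hA : MeasurableSet A) (hA' : IsUpperSet A)
    (hσ : Measurable (σ 0)) (h₀ : ν {true} ≤ P {ω | σ 0 ω = true}) :
    siteLaw (Zd d) ν A ≤ ∫⁻ ω, condProb ν (explore emb (fun s => σ s ω) 0) A ∂P := by
  simpa [condProb_empty, explore_zero] using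
    condProb_mul_le_setLIntegral_reveal (s := (∅, ∅)) (e := 0) (P := P) (C := Set.univ) hA hA'
      (by simp) (by simp) hσ (by simpa using h₀)

theorem lintegral_condProb_explore_le_succ {A : Set (Zd d → Bool)} (hA : MeasurableSet A)
    (hA' : IsUpperSet A) (hσ : ∀ t, Measurable (σ t)) (t : ℕ)
    (hcond : ∀ b : ℕ → Bool, ν {true} * P {ω | ∀ s ≤ t, σ s ω = b s} ≤
      P ({ω | σ (t + 1) ω = true} ∩ {ω | ∀ s ≤ t, σ s ω = b s})) :
    ∫⁻ ω, condProb ν (explore emb (fun s => σ s ω) t) A ∂P ≤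
      ∫⁻ ω, condProb ν (explore emb (fun s => σ s ω) (t + 1)) A ∂P := by
  refine lintegral_le_lintegral_of_histories hσ t fun b => ?_
  have hC : MeasurableSet {ω | ∀ s ≤ t, σ s ω = b s} := measurableSet_history hσ t b
  have hexp {ω : Ω} (hω : ω ∈ {ω | ∀ s ≤ t, σ s ω = b s}) :
      explore emb (fun s => σ s ω) t = explore emb b t := dependsOn_explore emb t hω
  by_cases hs : IsActive (explore emb b t)
  · obtain ⟨e, he₁, he₂, -, hsucc⟩ := exists_explore_succ_eq_reveal emb hs
    rw [setLIntegral_congr_fun hC fun ω hω => by rw [hexp hω], setLIntegral_const,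
      setLIntegral_congr_fun hC fun ω hω => by rw [hsucc _ t (hexp hω)]]
    exact condProb_mul_le_setLIntegral_reveal hA hA' he₁ he₂ (hσ (t + 1)) (hcond b)
  · refine (setLIntegral_congr_fun hC fun ω hω => ?_).le
    rw [explore_succ_of_not_isActive emb (hexp hω ▸ hs)]

theorem lintegral_condProb_explore_le_measure_isActive (t : ℕ) :
    ∫⁻ ω, condProb ν (explore emb (fun s => σ s ω) t) (infiniteCluster 0) ∂P ≤
      P {ω | IsActive (explore emb (fun s => σ s ω) t)} :=
  lintegral_le_meas (fun _ => prob_le_one) fun _ hω =>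
    condProb_infiniteCluster_eq_zero_of_not_isActive ν (zero_mem_explore emb _ t) hω

theorem siteLaw_infiniteCluster_le_measure_infinite_explore [IsProbabilityMeasure P]
    (hσ : ∀ t, Measurable (σ t)) (h₀ : ν {true} ≤ P {ω | σ 0 ω = true})
    (hcond : ∀ (t : ℕ) (b : ℕ → Bool), ν {true} * P {ω | ∀ s ≤ t, σ s ω = b s} ≤
      P ({ω | σ (t + 1) ω = true} ∩ {ω | ∀ s ≤ t, σ s ω = b s})) :
    siteLaw (Zd d) ν (infiniteCluster 0) ≤
      P {ω | Set.Infinite (⋃ t, ((explore emb (fun s => σ s ω) t).1 : Set (Zd d)))} := by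
  have hA := measurableSet_infiniteCluster (0 : Zd d)
  have hA' := isUpperSet_infiniteCluster (0 : Zd d)
  have hmono : Monotone fun t =>
      ∫⁻ ω, condProb ν (explore emb (fun s => σ s ω) t) (infiniteCluster 0) ∂P :=
    monotone_nat_of_le_succ fun t =>
      lintegral_condProb_explore_le_succ emb hA hA' hσ t (hcond t)
  have hactive (t : ℕ) : siteLaw (Zd d) ν (infiniteCluster 0) ≤
      P {ω | IsActive (explore emb (fun s => σ s ω) t)} :=
    (siteLaw_le_lintegral_condProb_explore_zero emb hA hA' (hσ 0) h₀).trans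
      ((hmono t.zero_le).trans (lintegral_condProb_explore_le_measure_isActive emb t))
  have hanti : Antitone fun t => {ω | IsActive (explore emb (fun s => σ s ω) t)} :=
    fun _ _ hst ω => antitone_isActive_explore emb (fun s => σ s ω) hst
  calc siteLaw (Zd d) ν (infiniteCluster 0)
      ≤ ⨅ t, P {ω | IsActive (explore emb (fun s => σ s ω) t)} := le_iInf hactive
    _ = P (⋂ t, {ω | IsActive (explore emb (fun s => σ s ω) t)}) :=
        (hanti.measure_iInter
          (fun t => (measurableSet_isActive_explore emb hσ t).nullMeasurableSet)
          ⟨0, measure_ne_top _ _⟩).symm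
    _ ≤ P {ω | Set.Infinite (⋃ t, ((explore emb (fun s => σ s ω) t).1 : Set (Zd d)))} :=
        measure_mono fun ω hω =>
          infinite_iUnion_explore_of_forall_isActive emb (Set.mem_iInter.1 hω)

end Comparison

theorem dynamic_renormalization_percolates {d : ℕ} (hd : 1 ≤ d)
    {Ω : Type*} [MeasurableSpace Ω] (P : Measure Ω) [IsProbabilityMeasure P]
    (emb : (Zd d × Zd d) ↪ ℕ)
    (σ : ℕ → Ω → Bool) (hσ : ∀ t, Measurable (σ t))
    (θ : ℝ≥0∞) (hθ1 : pcSite d < θ) (hθ2 : θ < 1)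
    (h0 : θ ≤ P {ω | σ 0 ω = true})
    (hcond : ∀ (t : ℕ) (b : ℕ → Bool),
      θ * P {ω | ∀ s ≤ t, σ s ω = b s} ≤
        P ({ω | σ (t + 1) ω = true} ∩ {ω | ∀ s ≤ t, σ s ω = b s})) :
    0 < P {ω | Set.Infinite (⋃ t, ((explore emb (fun s => σ s ω) t).1 : Set (Zd d)))} := by
  obtain ⟨p, hp, hpθ⟩ := sInf_lt_iff.1 hθ1
  obtain ⟨ν, hν, rfl⟩ := exists_isProbabilityMeasure_bool (hpθ.trans hθ2).le
  have hperc : siteLaw (Zd d) ν {η | PercSet {x | η x = true}} = 1 :=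
    hp _ inferInstance (isBernoulliSite_siteLaw d ν)
  calc 0 < siteLaw (Zd d) ν (infiniteCluster 0) :=
        siteLaw_infiniteCluster_pos (hperc.trans_ne one_ne_zero)
    _ ≤ P {ω | Set.Infinite (⋃ t, ((explore emb (fun s => σ s ω) t).1 : Set (Zd d)))} :=
        siteLaw_infiniteCluster_le_measure_infinite_explore emb hσ (hpθ.le.trans h0)
          fun t b => (mul_le_mul_left hpθ.le _).trans (hcond t b)

end
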